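/- arXiv:nlin/0604063 — 2 statements merged into one kernel-verified Lean document; each statement's English description precedes it below -/
import Mathlib

section
/- Let ν, μ ∈ ℂ with ν ≠ 0 and μ ≠ 0, let k, ξ₀ ∈ ℂ with k² = −μ/(19ν), and set b = 0 and A = 450 μ³/(19³ ν). Then the function u(ξ) = 120ν τ(ξ)³ − 15b τ(ξ)² + (60μ/19 − 30νk² − 15b²/(76ν)) τ(ξ) + (5/2)b k² − 13b³/(608ν²) + 7μb/(76ν), where τ(ξ) = (k/2)·tanh(k(ξ−ξ₀)/2), solves the KS ODE on the open set U = {ξ ∈ ℂ : cosh(k(ξ−ξ₀)/2) ≠ 0}. -/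
open Complex

/-! The function `τ` solves the Riccati equation `τ' = c - τ²` with `c = k²/4`, so differentiation
acts on polynomials in `τ` as the derivation of the polynomial ring sending `X` to `c - X²`. For
`b = 0` the coefficients of `u` collapse to `u = 120ν(τ³ - 3cτ)`, with `μ = -76νc` and
`A = -28800ν²c³`, and the KS equation becomes an identity between polynomials in `X` and `c` with
integer coefficients. -/

section PolynomialsAlongODE

open Polynomial Set

variable {𝕜 : Type*} [NontriviallyNormedField 𝕜] {q P : 𝕜[X]} {τ u : 𝕜 → 𝕜} {s : Set 𝕜} {x : 𝕜}

lemma hasDerivAt_eval_comp_of_ode (hτ : HasDerivAt τ (q.eval (τ x)) x) (P : 𝕜[X]) :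
    HasDerivAt (fun y ↦ P.eval (τ y)) ((mkDerivation 𝕜 q P).eval (τ x)) x := by
  rw [mkDerivation_apply, smul_eq_mul, eval_mul]
  exact (P.hasDerivAt (τ x)).comp x hτ

lemma eqOn_deriv_of_ode (hs : IsOpen s) (hτ : ∀ x ∈ s, HasDerivAt τ (q.eval (τ x)) x)
    (hu : EqOn u (fun x ↦ P.eval (τ x)) s) :
    EqOn (deriv u) (fun x ↦ (mkDerivation 𝕜 q P).eval (τ x)) s := fun x hx ↦
  ((hasDerivAt_eval_comp_of_ode (hτ x hx) P).congr_of_eventuallyEq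
    (hu.eventuallyEq_of_mem (hs.mem_nhds hx))).deriv

lemma eqOn_iterate_deriv_of_ode (hs : IsOpen s) (hτ : ∀ x ∈ s, HasDerivAt τ (q.eval (τ x)) x)
    (hu : EqOn u (fun x ↦ P.eval (τ x)) s) (n : ℕ) :
    EqOn (deriv^[n] u) (fun x ↦ ((mkDerivation 𝕜 q)^[n] P).eval (τ x)) s := by
  induction n with
  | zero => exact hu
  | succ n ih =>
    simp only [Function.iterate_succ_apply']
    exact eqOn_deriv_of_ode hs hτ ih

end PolynomialsAlongODE

section RiccatiDerivation

open Polynomial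

variable {R : Type*} [CommRing R]

/-- The derivation of `R[X]` with `X ↦ c - X²`: differentiation of polynomials in a solution `τ` of
the Riccati equation `τ' = c - τ²`. -/
noncomputable def riccatiDerivation (c : R) : Derivation R R[X] R[X] :=
  mkDerivation R (C c - X ^ 2)

/-- The cubic `X³ - 3cX`, which gives the KS solution up to the factor `120ν` when evaluated at a
solution `τ` of `τ' = c - τ²`. -/
noncomputable def ksCubic (c : R) : R[X] := X ^ 3 - C (3 * c) * X

lemma riccatiDerivation_apply (c : R) (P : R[X]) :
    riccatiDerivation c P = derivative P * (C c - X ^ 2) :=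
  mkDerivation_apply ..

lemma riccatiDerivation_ksCubic (c : R) :
    riccatiDerivation c (ksCubic c) = -3 * (X ^ 2 - C c) ^ 2 := by
  simp only [riccatiDerivation_apply, ksCubic, derivative_sub, derivative_X_pow, derivative_mul,
    derivative_C, derivative_ofNat, derivative_X, C_mul, map_ofNat, Nat.cast_ofNat]
  ring

lemma riccatiDerivation_iterate_two_ksCubic (c : R) :
    (riccatiDerivation c)^[2] (ksCubic c) = 12 * X * (X ^ 2 - C c) ^ 2 := by
  rw [Function.iterate_succ_apply', Function.iterate_one, riccatiDerivation_ksCubic]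
  simp only [riccatiDerivation_apply, derivative_mul, derivative_pow, derivative_sub,
    derivative_neg, derivative_ofNat, derivative_X, derivative_C, map_ofNat, Nat.cast_ofNat]
  ring

lemma riccatiDerivation_iterate_three_ksCubic (c : R) :
    (riccatiDerivation c)^[3] (ksCubic c) = -12 * (X ^ 2 - C c) ^ 2 * (5 * X ^ 2 - C c) := by
  rw [Function.iterate_succ_apply', riccatiDerivation_iterate_two_ksCubic]
  simp only [riccatiDerivation_apply, derivative_mul, derivative_pow, derivative_sub,
    derivative_ofNat, derivative_X, derivative_C, map_ofNat, Nat.cast_ofNat]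
  ring

lemma ksCubic_identity (c : R) :
    (riccatiDerivation c)^[3] (ksCubic c) - C (76 * c) * riccatiDerivation c (ksCubic c)
      + 60 * ksCubic c ^ 2 - C (240 * c ^ 3) = 0 := by
  rw [riccatiDerivation_iterate_three_ksCubic, riccatiDerivation_ksCubic, ksCubic]
  simp only [C_mul, C_pow, map_ofNat]
  ring

theorem ks_solution_of_riccati {𝕜 : Type*} [NontriviallyNormedField 𝕜] [NeZero (2 : 𝕜)] (ν : 𝕜)
    {c x : 𝕜} {τ u : 𝕜 → 𝕜} {s : Set 𝕜} (hs : IsOpen s)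
    (hτ : ∀ x ∈ s, HasDerivAt τ (c - τ x ^ 2) x)
    (hu : ∀ x ∈ s, u x = 120 * ν * (τ x ^ 3 - 3 * c * τ x)) (hx : x ∈ s) :
    ν * deriv^[3] u x - 76 * ν * c * deriv u x + u x ^ 2 / 2 - 28800 * ν ^ 2 * c ^ 3 = 0 := by
  have hriccati : ∀ x ∈ s, HasDerivAt τ ((C c - X ^ 2).eval (τ x)) x := by simpa using hτ
  have hucubic : Set.EqOn u (fun x ↦ ((120 * ν) • ksCubic c).eval (τ x)) s := by
    simpa [Set.EqOn, ksCubic] using hu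
  have hux : u x = 120 * ν * (ksCubic c).eval (τ x) := by
    simpa only [eval_smul, smul_eq_mul] using hucubic hx
  have hderiv : deriv u x = 120 * ν * (riccatiDerivation c (ksCubic c)).eval (τ x) := by
    simpa only [riccatiDerivation, Derivation.map_smul, eval_smul, smul_eq_mul] using
      eqOn_deriv_of_ode hs hriccati hucubic hx
  have hderiv3 : deriv^[3] u x = 120 * ν * ((riccatiDerivation c)^[3] (ksCubic c)).eval (τ x) := by
    simpa only [Function.iterate_succ_apply, Function.iterate_zero_apply, riccatiDerivation,
      Derivation.map_smul, eval_smul, smul_eq_mul] using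
      eqOn_iterate_deriv_of_ode hs hriccati hucubic 3 hx
  have hidentity := congrArg (eval (τ x)) (ksCubic_identity c)
  simp only [eval_add, eval_sub, eval_mul, eval_pow, eval_C, eval_ofNat, eval_zero] at hidentity
  have htwo : (2 : 𝕜) ≠ 0 := two_ne_zero
  rw [hderiv, hderiv3, hux]
  field_simp
  linear_combination 240 * ν ^ 2 * hidentity

end RiccatiDerivation

lemma hasDerivAt_const_mul_tanh {a x : ℂ} {f : ℂ → ℂ} (hf : HasDerivAt f a x)
    (hx : cosh (f x) ≠ 0) :
    HasDerivAt (fun y ↦ a * tanh (f y)) (a ^ 2 - (a * tanh (f x)) ^ 2) x := by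
  simp only [tanh_eq_sinh_div_cosh]
  refine ((hf.csinh.fun_div hf.ccosh hx).const_mul a).congr_deriv ?_
  field_simp

lemma hasDerivAt_half_mul_tanh (k ξ₀ : ℂ) {ξ : ℂ} (hξ : cosh (k * (ξ - ξ₀) / 2) ≠ 0) :
    HasDerivAt (fun ξ ↦ k / 2 * tanh (k * (ξ - ξ₀) / 2))
      (k ^ 2 / 4 - (k / 2 * tanh (k * (ξ - ξ₀) / 2)) ^ 2) ξ := by
  have hphase : HasDerivAt (fun ξ ↦ k * (ξ - ξ₀) / 2) (k / 2) ξ := by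
    simpa using (((hasDerivAt_id ξ).sub_const ξ₀).const_mul k).div_const 2
  exact (hasDerivAt_const_mul_tanh hphase hξ).congr_deriv (by ring)

theorem ks_trig_solution_case2_general {𝕜 : Type*} [NontriviallyNormedField 𝕜] [CharZero 𝕜]
    {ν μ A k : 𝕜} (hν : ν ≠ 0) (hk : k ^ 2 = -μ / (19 * ν))
    (hA : A = 450 * μ ^ 3 / (19 ^ 3 * ν)) {s : Set 𝕜} (hs : IsOpen s) {τ u : 𝕜 → 𝕜}
    (hτ : ∀ x ∈ s, HasDerivAt τ (k ^ 2 / 4 - τ x ^ 2) x)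
    (hu : ∀ x ∈ s, u x = 120 * ν * τ x ^ 3 + (60 * μ / 19 - 30 * ν * k ^ 2) * τ x) :
    ∀ x ∈ s, ν * deriv^[3] u x + μ * deriv u x + u x ^ 2 / 2 + A = 0 := by
  have hμ : μ = -(76 * ν * (k ^ 2 / 4)) := by
    rw [hk]
    field_simp
    ring
  have hA' : A = -(28800 * ν ^ 2 * (k ^ 2 / 4) ^ 3) := by
    rw [hA, hμ]
    field_simp
    ring
  have hu' : ∀ x ∈ s, u x = 120 * ν * (τ x ^ 3 - 3 * (k ^ 2 / 4) * τ x) := fun x hx ↦ by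
    rw [hu x hx, hμ]
    field_simp
    ring
  intro x hx
  linear_combination ks_solution_of_riccati ν hs hτ hu' hx + hA' + deriv u x * hμ

/-- a trigonometric (tanh-polynomial) solution of the KS traveling-wave ODE
`ν u''' + b u'' + μ u' + u²/2 + A = 0`. -/
theorem ks_trig_solution_case2
    (ν b μ A k ξ₀ : ℂ) (hν : ν ≠ 0) (hμ : μ ≠ 0)
    (hk : k ^ 2 = -μ / (19 * ν)) (hb : b = 0)
    (hA : A = 450 * μ ^ 3 / (19 ^ 3 * ν))
    (τ u : ℂ → ℂ)
    (hτ : ∀ ξ : ℂ, τ ξ = k / 2 * Complex.tanh (k * (ξ - ξ₀) / 2))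
    (hu : ∀ ξ : ℂ, u ξ =
      120 * ν * (τ ξ) ^ 3 - 15 * b * (τ ξ) ^ 2
        + (60 * μ / 19 - 30 * ν * k ^ 2 - 15 * b ^ 2 / (76 * ν)) * τ ξ
        + 5 / 2 * b * k ^ 2 - 13 * b ^ 3 / (608 * ν ^ 2) + 7 * μ * b / (76 * ν)) :
    ∀ ξ : ℂ, Complex.cosh (k * (ξ - ξ₀) / 2) ≠ 0 →
      ν * deriv^[3] u ξ + b * deriv^[2] u ξ + μ * deriv u ξ + (u ξ) ^ 2 / 2 + A = 0 := by
  obtain rfl := funext hτ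
  have hopen : IsOpen {ξ : ℂ | cosh (k * (ξ - ξ₀) / 2) ≠ 0} :=
    isOpen_ne_fun (by fun_prop) (by fun_prop)
  simpa [hb] using ks_trig_solution_case2_general hν hk hA hopen
    (fun ξ hξ ↦ hasDerivAt_half_mul_tanh k ξ₀ hξ) (fun ξ _ ↦ by simpa [hb] using hu ξ)
end

section
/- Let ν, b, μ ∈ ℂ with ν ≠ 0 and μ ≠ 0, suppose b² = 256μν/73, let k, ξ₀ ∈ ℂ with k² = μ/(73ν), and set A = −4050 μ³/(73³ ν). Then the function u(ξ) = 120ν τ(ξ)³ − 15b τ(ξ)² + (60μ/19 − 30νk² − 15b²/(76ν)) τ(ξ) + (5/2)b k² − 13b³/(608ν²) + 7μb/(76ν), where τ(ξ) = (k/2)·tanh(k(ξ−ξ₀)/2), solves the KS ODE on the open set U = {ξ ∈ ℂ : cosh(k(ξ−ξ₀)/2) ≠ 0}. -/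
open Complex

/-!
The function `τ` satisfies the Riccati equation `τ' = a² - τ²` with `a = k / 2`. Hence, for every
polynomial `P`, the derivative of `P(τ)` is `(D P)(τ)`, where `D` is the derivation of `ℂ[X]` with
`D X = a² - X²`, and the KS equation for `u = P(τ)` becomes an identity between polynomials.
In terms of `a` the hypotheses read `μ = 292 ν a²`, `A = -259200 ν² a⁶` and `b² = 1024 ν² a²`,
and `P` becomes `120 ν X³ - 15 b X² + 600 ν a² X + 15 b a²`. With these `μ` and `A` the left-hand
side of the polynomial identity is a multiple of `b² - 1024 ν² a²`.
-/

open Polynomial Set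

/-- The left-hand side `ν u''' + b u'' + μ u' + u²/2 + A` of the Kuramoto–Sivashinsky traveling-wave
equation in a `K`-algebra `R`, where `u'` means `D u`. The operator `D` is arbitrary so that both
`deriv` on functions and derivations of a polynomial ring are covered. In characteristic two the
quadratic term vanishes, since then `2⁻¹ = 0`. -/
def kuramotoSivashinsky {K R : Type*} [Field K] [CommRing R] [Algebra K R] (ν b μ A : K)
    (D : R → R) (u : R) : R :=
  ν • D^[3] u + b • D^[2] u + μ • D u + (2⁻¹ : K) • u ^ 2 + algebraMap K R A

theorem kuramotoSivashinsky_apply {ι K : Type*} [Field K] (ν b μ A : K)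
    (D : (ι → K) → ι → K) (u : ι → K) (i : ι) :
    kuramotoSivashinsky ν b μ A D u i =
      ν * D^[3] u i + b * D^[2] u i + μ * D u i + u i ^ 2 / 2 + A := by
  simp only [kuramotoSivashinsky, Pi.add_apply, Pi.smul_apply, Pi.pow_apply, Pi.algebraMap_apply,
    Algebra.algebraMap_self, RingHom.id_apply, smul_eq_mul, div_eq_inv_mul]

/-- The cubic `P` such that `P(τ)` is the traveling-wave profile, for `τ' = a² - τ²`. -/
noncomputable def ksProfile {R : Type*} [CommRing R] (ν b a : R) : R[X] :=
  120 * C ν * X ^ 3 - 15 * C b * X ^ 2 + 600 * C ν * C (a ^ 2) * X + 15 * C b * C (a ^ 2)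

section PolynomialInSolution

variable {𝕜 : Type*} [NontriviallyNormedField 𝕜] {s : Set 𝕜} {f τ : 𝕜 → 𝕜} {p q : 𝕜[X]}

theorem eqOn_deriv_eval_mkDerivation (hs : IsOpen s)
    (hτ : ∀ z ∈ s, HasDerivAt τ (q.eval (τ z)) z) (hf : EqOn f (fun z ↦ p.eval (τ z)) s) :
    EqOn (deriv f) (fun z ↦ (mkDerivation 𝕜 q p).eval (τ z)) s := by
  intro z hz
  simp only [hf.deriv hs hz, mkDerivation_apply, smul_eq_mul, eval_mul]
  exact ((p.hasDerivAt (τ z)).comp z (hτ z hz)).deriv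

theorem eqOn_iterate_deriv_eval_mkDerivation (hs : IsOpen s)
    (hτ : ∀ z ∈ s, HasDerivAt τ (q.eval (τ z)) z) (hf : EqOn f (fun z ↦ p.eval (τ z)) s) (n : ℕ) :
    EqOn (deriv^[n] f) (fun z ↦ ((mkDerivation 𝕜 q)^[n] p).eval (τ z)) s := by
  induction n with
  | zero => exact hf
  | succ n ih =>
    simp only [Function.iterate_succ_apply']
    exact eqOn_deriv_eval_mkDerivation hs hτ ih

theorem eqOn_kuramotoSivashinsky_deriv (ν b μ A : 𝕜) (hs : IsOpen s)
    (hτ : ∀ z ∈ s, HasDerivAt τ (q.eval (τ z)) z) (hf : EqOn f (fun z ↦ p.eval (τ z)) s) :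
    EqOn (kuramotoSivashinsky ν b μ A deriv f)
      (fun z ↦ (kuramotoSivashinsky ν b μ A (mkDerivation 𝕜 q) p).eval (τ z)) s := by
  intro z hz
  have hderiv (n : ℕ) := eqOn_iterate_deriv_eval_mkDerivation hs hτ hf n hz
  rw [kuramotoSivashinsky_apply, hderiv 3, hderiv 2, eqOn_deriv_eval_mkDerivation hs hτ hf hz,
    hf hz]
  simp only [kuramotoSivashinsky, eval_add, eval_smul, eval_pow, algebraMap_eq, eval_C,
    smul_eq_mul, div_eq_inv_mul]

end PolynomialInSolution

section Profile

variable {R : Type*} [CommRing R] (ν b a : R)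

theorem mkDerivation_ksProfile :
    mkDerivation R (C (a ^ 2) - X ^ 2) (ksProfile ν b a) =
      (360 * C ν * X ^ 2 - 30 * C b * X + 600 * C ν * C (a ^ 2)) * (C (a ^ 2) - X ^ 2) := by
  simp only [mkDerivation_apply, ksProfile, derivative_add, derivative_sub, derivative_mul,
    derivative_X_pow, derivative_X, derivative_C, derivative_ofNat, Nat.cast_ofNat, C_ofNat,
    smul_eq_mul]
  ring

theorem iterate_two_mkDerivation_ksProfile :
    (mkDerivation R (C (a ^ 2) - X ^ 2))^[2] (ksProfile ν b a) =
      (-1440 * C ν * X ^ 3 + 90 * C b * X ^ 2 - 480 * C ν * C (a ^ 2) * X - 30 * C b * C (a ^ 2)) *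
        (C (a ^ 2) - X ^ 2) := by
  rw [Function.iterate_succ_apply', Function.iterate_one, mkDerivation_ksProfile]
  simp only [mkDerivation_apply, derivative_add, derivative_sub, derivative_mul, derivative_X_pow,
    derivative_X, derivative_C, derivative_ofNat, Nat.cast_ofNat, C_ofNat, smul_eq_mul]
  ring

theorem iterate_three_mkDerivation_ksProfile :
    (mkDerivation R (C (a ^ 2) - X ^ 2))^[3] (ksProfile ν b a) =
      (7200 * C ν * X ^ 4 - 360 * C b * X ^ 3 - 2880 * C ν * C (a ^ 2) * X ^ 2
        + 240 * C b * C (a ^ 2) * X - 480 * C ν * C (a ^ 2) ^ 2) * (C (a ^ 2) - X ^ 2) := by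
  rw [Function.iterate_succ_apply', iterate_two_mkDerivation_ksProfile]
  simp only [mkDerivation_apply, derivative_add, derivative_sub, derivative_mul, derivative_neg,
    derivative_X_pow, derivative_X, derivative_C, derivative_ofNat, Nat.cast_ofNat, C_ofNat,
    smul_eq_mul]
  ring

end Profile

section ProfileEquation

variable {K : Type*} [Field K] [CharZero K]

theorem kuramotoSivashinsky_ksProfile_eq_zero {ν b a : K} (hb : b ^ 2 = 1024 * ν ^ 2 * a ^ 2) :
    kuramotoSivashinsky ν b (292 * ν * a ^ 2) (-259200 * ν ^ 2 * a ^ 6)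
      (mkDerivation K (C (a ^ 2) - X ^ 2)) (ksProfile ν b a) = 0 := by
  rw [kuramotoSivashinsky, mkDerivation_ksProfile, iterate_two_mkDerivation_ksProfile,
    iterate_three_mkDerivation_ksProfile]
  refine Polynomial.funext fun t ↦ ?_
  simp only [ksProfile, algebraMap_eq, eval_add, eval_sub, eval_mul, eval_neg, eval_pow, eval_smul,
    eval_C, eval_X, eval_ofNat, eval_zero, smul_eq_mul]
  linear_combination ((90 * t ^ 2 - 30 * a ^ 2) * (a ^ 2 - t ^ 2)
    + 225 / 2 * (a ^ 2 - t ^ 2) ^ 2) * hb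

theorem eval_ksProfile_half {ν b μ k : K} (hν : ν ≠ 0) (hμ : μ = 73 * ν * k ^ 2)
    (hb : b ^ 2 = 256 * ν ^ 2 * k ^ 2) (t : K) :
    (ksProfile ν b (k / 2)).eval t =
      120 * ν * t ^ 3 - 15 * b * t ^ 2
        + (60 * μ / 19 - 30 * ν * k ^ 2 - 15 * b ^ 2 / (76 * ν)) * t
        + 5 / 2 * b * k ^ 2 - 13 * b ^ 3 / (608 * ν ^ 2) + 7 * μ * b / (76 * ν) := by
  have hlinear : 60 * μ / 19 - 30 * ν * k ^ 2 - 15 * b ^ 2 / (76 * ν) = 150 * ν * k ^ 2 := by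
    rw [hb, hμ]
    field_simp
    ring
  have hconst : 5 / 2 * b * k ^ 2 - 13 * b ^ 3 / (608 * ν ^ 2) + 7 * μ * b / (76 * ν) =
      15 / 4 * b * k ^ 2 := by
    rw [pow_succ b 2, hb, hμ]
    field_simp
    ring
  simp only [ksProfile, eval_add, eval_sub, eval_mul, eval_pow, eval_C, eval_X, eval_ofNat]
  linear_combination -t * hlinear - hconst

end ProfileEquation

theorem eqOn_kuramotoSivashinsky_deriv_ksProfile_zero {𝕜 : Type*} [NontriviallyNormedField 𝕜]
    [CharZero 𝕜] {s : Set 𝕜} {τ : 𝕜 → 𝕜} {ν b a : 𝕜} (hs : IsOpen s)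
    (hτ : ∀ z ∈ s, HasDerivAt τ (a ^ 2 - τ z ^ 2) z) (hb : b ^ 2 = 1024 * ν ^ 2 * a ^ 2) :
    EqOn (kuramotoSivashinsky ν b (292 * ν * a ^ 2) (-259200 * ν ^ 2 * a ^ 6) deriv
      (fun z ↦ (ksProfile ν b a).eval (τ z))) 0 s := by
  have hriccati : ∀ z ∈ s, HasDerivAt τ ((C (a ^ 2) - X ^ 2 : 𝕜[X]).eval (τ z)) z := by
    simpa only [eval_sub, eval_C, eval_pow, eval_X] using hτ
  intro z hz
  simp only [eqOn_kuramotoSivashinsky_deriv _ _ _ _ hs hriccati (eqOn_refl _ s) hz,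
    kuramotoSivashinsky_ksProfile_eq_zero hb, eval_zero, Pi.zero_apply]

section Tanh

theorem hasDerivAt_complex_tanh {z : ℂ} (hz : cosh z ≠ 0) :
    HasDerivAt tanh (1 - tanh z ^ 2) z := by
  have htanh : tanh = fun w ↦ sinh w / cosh w := funext tanh_eq_sinh_div_cosh
  rw [htanh]
  refine ((hasDerivAt_sinh z).div (hasDerivAt_cosh z) hz).congr_deriv ?_
  field_simp

theorem hasDerivAt_mul_tanh_mul_sub (a z₀ : ℂ) {z : ℂ} (hz : cosh (a * (z - z₀)) ≠ 0) :
    HasDerivAt (fun w ↦ a * tanh (a * (w - z₀))) (a ^ 2 - (a * tanh (a * (z - z₀))) ^ 2) z := by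
  have hlin : HasDerivAt (fun w ↦ a * (w - z₀)) a z := by
    simpa using ((hasDerivAt_id z).sub_const z₀).const_mul a
  refine (((hasDerivAt_complex_tanh hz).comp z hlin).const_mul a).congr_deriv ?_
  ring

theorem kuramotoSivashinsky_deriv_ksProfile_tanh {ν b a : ℂ} (hb : b ^ 2 = 1024 * ν ^ 2 * a ^ 2)
    (z₀ : ℂ) {z : ℂ} (hz : cosh (a * (z - z₀)) ≠ 0) :
    kuramotoSivashinsky ν b (292 * ν * a ^ 2) (-259200 * ν ^ 2 * a ^ 6) deriv
      (fun w ↦ (ksProfile ν b a).eval (a * tanh (a * (w - z₀)))) z = 0 := by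
  have hopen : IsOpen {w | cosh (a * (w - z₀)) ≠ 0} :=
    isOpen_ne_fun (by fun_prop) continuous_const
  exact eqOn_kuramotoSivashinsky_deriv_ksProfile_zero hopen
    (fun w hw ↦ hasDerivAt_mul_tanh_mul_sub a z₀ hw) hb hz

end Tanh

/-- a trigonometric (tanh-polynomial) solution of the KS traveling-wave ODE
`ν u''' + b u'' + μ u' + u²/2 + A = 0`. -/
theorem ks_trig_solution_case4
    (ν b μ A k ξ₀ : ℂ) (hν : ν ≠ 0) (hμ : μ ≠ 0)
    (hb : b ^ 2 = 256 * μ * ν / 73) (hk : k ^ 2 = μ / (73 * ν))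
    (hA : A = -4050 * μ ^ 3 / (73 ^ 3 * ν))
    (τ u : ℂ → ℂ)
    (hτ : ∀ ξ : ℂ, τ ξ = k / 2 * Complex.tanh (k * (ξ - ξ₀) / 2))
    (hu : ∀ ξ : ℂ, u ξ =
      120 * ν * (τ ξ) ^ 3 - 15 * b * (τ ξ) ^ 2
        + (60 * μ / 19 - 30 * ν * k ^ 2 - 15 * b ^ 2 / (76 * ν)) * τ ξ
        + 5 / 2 * b * k ^ 2 - 13 * b ^ 3 / (608 * ν ^ 2) + 7 * μ * b / (76 * ν)) :
    ∀ ξ : ℂ, Complex.cosh (k * (ξ - ξ₀) / 2) ≠ 0 →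
      ν * deriv^[3] u ξ + b * deriv^[2] u ξ + μ * deriv u ξ + (u ξ) ^ 2 / 2 + A = 0 := by
  have hμk : μ = 73 * ν * k ^ 2 := by rw [hk]; field_simp
  have hbk : b ^ 2 = 256 * ν ^ 2 * k ^ 2 := by rw [hb, hμk]; ring
  have hμa : μ = 292 * ν * (k / 2) ^ 2 := by rw [hμk]; ring
  have hba : b ^ 2 = 1024 * ν ^ 2 * (k / 2) ^ 2 := by rw [hbk]; ring
  have hAa : A = -259200 * ν ^ 2 * (k / 2) ^ 6 := by rw [hA, hμk]; field_simp; ring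
  have huP : u = fun ξ ↦ (ksProfile ν b (k / 2)).eval (k / 2 * tanh (k / 2 * (ξ - ξ₀))) := by
    funext ξ
    rw [hu, ← eval_ksProfile_half hν hμk hbk, hτ, div_mul_eq_mul_div k 2 (ξ - ξ₀)]
  intro ξ hξ
  rw [← div_mul_eq_mul_div] at hξ
  have hks := kuramotoSivashinsky_deriv_ksProfile_tanh hba ξ₀ hξ
  rwa [← huP, ← hμa, ← hAa, kuramotoSivashinsky_apply] at hks
end
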